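/- Let M be an acyclic matching on the graph G(C•) of the chain complex C•. Then the map f is a morphism of complexes: ∂^M ∘ f = f ∘ ∂ in every homological degree. -/

import Mathlib

/-!
Algebraic Discrete Morse theory (Jöllenbeck–Welker).

Setup: `R` is a (possibly noncommutative) ring and `C` is a chain complex of free
left `R`-modules `C i = X i → R` with fixed finite basis `X i` in homological
degree `i`; the differential is `∂ i (c) = ∑ c', d i c c' • c'` (we record only the
matrix of coefficients `d`).  `M` is a matching on the associated weighted directed
graph, `MStep` describes the edges of the modified graph `G_M`, `MPath` the directed
paths, `Gamma v w` the sum of the weights of all paths from `v` to `w`, `Crit` the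
critical basis elements, `DMmap` the Morse differential, and `fmap`, `gmap`, `chimap`
the comparison maps and the homotopy.
-/

attribute [local instance] Classical.propDecidable

noncomputable section

section ADMT

variable {R : Type} [Ring R]
variable (X : ℕ → Type) [∀ i, Fintype (X i)]
variable (d : ∀ i, X (i + 1) → X i → R)
variable (M : ∀ i, Set (X (i + 1) × X i))

/-- The family of coefficients `d` of the differentials satisfies `∂ ∘ ∂ = 0`,
i.e. `C` is a chain complex. -/
def IsComplexAux : Prop :=
  ∀ (i : ℕ) (c : X (i + 2)) (c'' : X i),
    ∑ c' : X (i + 1), d (i + 1) c c' * d i c' c'' = 0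

/-- The edges of the modified graph `G_M`: downward steps along non-matched edges
of the graph `G(C)` (weight `d i c c'`), and upward reversed steps along matched
edges (weight `-(d i c c')⁻¹`). -/
inductive MStep : (Σ i, X i) → (Σ i, X i) → Prop
  | down (i : ℕ) (c : X (i + 1)) (c' : X i) (hne : d i c c' ≠ 0)
      (hnm : (c, c') ∉ M i) : MStep ⟨i + 1, c⟩ ⟨i, c'⟩
  | up (i : ℕ) (c : X (i + 1)) (c' : X i) (hmem : (c, c') ∈ M i) :
      MStep ⟨i, c'⟩ ⟨i + 1, c⟩

/-- `M` is an acyclic matching: all edges of `M` are edges of the graph `G(C)`,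
every vertex lies in at most one edge of `M`, the weights of matched edges are
central units of `R`, and the modified graph `G_M` has no directed cycle. -/
def IsAcyclicMatching : Prop :=
  (∀ (i : ℕ) (c : X (i + 1)) (c' : X i), (c, c') ∈ M i → d i c c' ≠ 0) ∧
  (∀ (i : ℕ) (c : X (i + 1)) (c₁ c₂ : X i), (c, c₁) ∈ M i → (c, c₂) ∈ M i → c₁ = c₂) ∧
  (∀ (i : ℕ) (c₁ c₂ : X (i + 1)) (c' : X i), (c₁, c') ∈ M i → (c₂, c') ∈ M i → c₁ = c₂) ∧
  (∀ (i : ℕ) (a : X (i + 2)) (b : X (i + 1)) (c : X i),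
      (a, b) ∈ M (i + 1) → (b, c) ∈ M i → False) ∧
  (∀ (i : ℕ) (c : X (i + 1)) (c' : X i), (c, c') ∈ M i →
      d i c c' ∈ Set.center R ∧ IsUnit (d i c c')) ∧
  (∀ v : Σ i, X i, ¬ Relation.TransGen (MStep X d M) v v)

/-- Directed paths in the modified graph `G_M`. -/
inductive MPath : (Σ i, X i) → (Σ i, X i) → Type
  | nil (v : Σ i, X i) : MPath v v
  | down (i : ℕ) (c : X (i + 1)) (c' : X i) (hne : d i c c' ≠ 0)
      (hnm : (c, c') ∉ M i) (w : Σ i, X i) (p : MPath ⟨i, c'⟩ w) :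
      MPath ⟨i + 1, c⟩ w
  | up (i : ℕ) (c : X (i + 1)) (c' : X i) (hmem : (c, c') ∈ M i)
      (w : Σ i, X i) (p : MPath ⟨i + 1, c⟩ w) : MPath ⟨i, c'⟩ w

/-- The weight of a path: the product of the weights of its edges.  A non-matched
edge `c → c'` has weight `d i c c'`; a reversed matched edge has weight
`-(d i c c')⁻¹`. -/
def MPath.weight : ∀ {v w : Σ i, X i}, MPath X d M v w → R
  | _, _, .nil _ => 1
  | _, _, .down i c c' _ _ _ p => d i c c' * MPath.weight p
  | _, _, .up i c c' _ _ p => -(Ring.inverse (d i c c')) * MPath.weight p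

/-- The first step of the path decreases the homological degree. -/
def MPath.firstDown : ∀ {v w : Σ i, X i}, MPath X d M v w → Prop
  | _, _, .nil _ => False
  | _, _, .down _ _ _ _ _ _ _ => True
  | _, _, .up _ _ _ _ _ _ => False

/-- The first step of the path increases the homological degree. -/
def MPath.firstUp : ∀ {v w : Σ i, X i}, MPath X d M v w → Prop
  | _, _, .nil _ => False
  | _, _, .down _ _ _ _ _ _ _ => False
  | _, _, .up _ _ _ _ _ _ => True

/-- `Γ(v,w)`: the sum of the weights of all directed paths from `v` to `w` in `G_M`
(under the acyclicity hypothesis there are only finitely many such paths). -/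
def Gamma (v w : Σ i, X i) : R := ∑ᶠ p : MPath X d M v w, MPath.weight X d M p

/-- `Γ↓(v,w)`: the sum of the weights of all paths from `v` to `w` whose first step
decreases the homological degree. -/
def GammaDown (v w : Σ i, X i) : R :=
  ∑ᶠ (p : MPath X d M v w) (_ : MPath.firstDown X d M p), MPath.weight X d M p

/-- `Γ↑(v,w)`: the sum of the weights of all paths from `v` to `w` whose first step
increases the homological degree. -/
def GammaUp (v w : Σ i, X i) : R :=
  ∑ᶠ (p : MPath X d M v w) (_ : MPath.firstUp X d M p), MPath.weight X d M p

/-- A basis element is critical if it lies in no edge of `M`. -/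
def CriticalV (v : Σ i, X i) : Prop :=
  ∀ (j : ℕ) (a : X (j + 1)) (b : X j), (a, b) ∈ M j →
    v ≠ ⟨j + 1, a⟩ ∧ v ≠ ⟨j, b⟩

/-- The critical basis elements of homological degree `i`. -/
abbrev Crit (i : ℕ) := {c : X i // CriticalV X M ⟨i, c⟩}

/-- The `R`-linear map between free left `R`-modules determined by a matrix of
coefficients. -/
def liftMap {α β : Type} [Fintype α] (w : α → β → R) :
    (α → R) →ₗ[R] (β → R) where
  toFun v b := ∑ a, v a * w a b
  map_add' u v := by
    funext b
    simp [add_mul, Finset.sum_add_distrib]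
  map_smul' r v := by
    funext b
    simp [Finset.mul_sum, mul_assoc]

/-- The differential `∂` of the original complex `C`. -/
def Dmap (i : ℕ) : (X (i + 1) → R) →ₗ[R] (X i → R) :=
  liftMap (fun c c' => d i c c')

/-- The Morse differential `∂^M (c) = ∑ Γ(c,c') • c'` on the critical cells. -/
def DMmap (i : ℕ) : (Crit X M (i + 1) → R) →ₗ[R] (Crit X M i → R) :=
  liftMap (fun c c' => Gamma X d M ⟨i + 1, c.1⟩ ⟨i, c'.1⟩)

/-- The comparison map `f : C → C^M`, `f(c) = ∑ Γ(c,c') • c'`. -/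
def fmap (i : ℕ) : (X i → R) →ₗ[R] (Crit X M i → R) :=
  liftMap (fun c c' => Gamma X d M ⟨i, c⟩ ⟨i, c'.1⟩)

/-- The comparison map `g : C^M → C`, `g(c) = ∑ Γ(c,c') • c'`. -/
def gmap (i : ℕ) : (Crit X M i → R) →ₗ[R] (X i → R) :=
  liftMap (fun c c' => Gamma X d M ⟨i, c.1⟩ ⟨i, c'⟩)

/-- The homotopy `χ : C_i → C_{i+1}`, `χ(c) = ∑ Γ(c,c') • c'`. -/
def chimap (i : ℕ) : (X i → R) →ₗ[R] (X (i + 1) → R) :=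
  liftMap (fun c c' => Gamma X d M ⟨i, c⟩ ⟨i + 1, c'⟩)

/-!
The free module `C_n` is generated by the basis elements that are not the lower end of a matched
edge, together with the boundaries `∂ a` of the upper ends `a` of matched edges: if `(a, c) ∈ M`,
then `∂ a` expresses `c` through basis elements that are strictly later than `c` in the acyclic
graph `G_M`. Hence `∂^M ∘ f = f ∘ ∂` needs to be checked on these generators only. The first edge
of a path shows that `f` is the identity on critical elements and kills upper ends `a`, and that
`f (∂ c) = ∂^M c` for critical `c` and `f (∂ a) = 0`; on a generator `∂ a` both sides vanish, since
`∂ ∂ a = 0`.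
-/

/-- The vertex `v` is the lower end of a matched edge, so that it has an upward step in `G_M`. -/
def IsMatchedUp (v : Σ i, X i) : Prop := ∃ a : X (v.1 + 1), (a, v.2) ∈ M v.1

/-- A bound on the degrees that paths of `G_M` starting at `v` can reach. Paths zigzag between two
adjacent degrees before they descend, and `height` never increases along a path, unlike the
degree. -/
def height (v : Σ i, X i) : ℕ := if IsMatchedUp X M v then v.1 + 1 else v.1

/-- Acyclic matchings over units: the notion of acyclic matching in which the weights of matched
edges are invertible but not required to be central. That no vertex is both an upper and a lower
end is phrased through `IsMatchedUp`. -/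
structure IsAcyclicUnitMatching : Prop where
  lower_unique : ∀ {i : ℕ} {a : X (i + 1)} {c₁ c₂ : X i}, (a, c₁) ∈ M i → (a, c₂) ∈ M i → c₁ = c₂
  upper_unique : ∀ {i : ℕ} {a₁ a₂ : X (i + 1)} {c : X i}, (a₁, c) ∈ M i → (a₂, c) ∈ M i → a₁ = a₂
  not_isMatchedUp : ∀ {i : ℕ} {a : X (i + 1)} {c : X i}, (a, c) ∈ M i → ¬ IsMatchedUp X M ⟨i + 1, a⟩
  isUnit : ∀ {i : ℕ} {a : X (i + 1)} {c : X i}, (a, c) ∈ M i → IsUnit (d i a c)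
  acyclic : ∀ v : Σ i, X i, ¬ Relation.TransGen (MStep X d M) v v

/-- The generators of `C_n` on which the chain map identity is checked: the basis elements that
are not lower ends of matched edges, and the boundaries of the upper ends. -/
def morseGenerators (n : ℕ) : Set (X n → R) :=
  {v | ∃ c, ¬ IsMatchedUp X M ⟨n, c⟩ ∧ v = Pi.single c 1} ∪
    {v | ∃ a c, (a, c) ∈ M n ∧ v = Dmap X d n (Pi.single a 1)}

section

variable {X d M}

section

omit [∀ i, Fintype (X i)]

theorem IsAcyclicMatching.isAcyclicUnitMatching (hM : IsAcyclicMatching X d M) :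
    IsAcyclicUnitMatching X d M := by
  obtain ⟨-, lower, upper, chain, weight, acyclic⟩ := hM
  exact ⟨lower _ _ _ _, upper _ _ _ _, fun h ⟨b, hb⟩ => chain _ b _ _ hb h,
    fun h => (weight _ _ _ h).2, acyclic⟩

theorem CriticalV.not_isMatchedUp {v : Σ i, X i} (hv : CriticalV X M v) : ¬ IsMatchedUp X M v :=
  fun ⟨a, ha⟩ => (hv v.1 a v.2 ha).2 rfl

theorem CriticalV.notMem {n : ℕ} {a : X (n + 1)} (ha : CriticalV X M ⟨n + 1, a⟩) (c : X n) :
    (a, c) ∉ M n :=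
  fun h => (ha n a c h).1 rfl

theorem criticalV_succ_of_not_matched {n : ℕ} {a : X (n + 1)}
    (hup : ¬ IsMatchedUp X M ⟨n + 1, a⟩) (hdown : ∀ c, (a, c) ∉ M n) :
    CriticalV X M ⟨n + 1, a⟩ := by
  refine fun j b c hbc => ⟨fun h => ?_, fun h => ?_⟩
  · cases h
    exact hdown c hbc
  · obtain rfl : n + 1 = j := congrArg Sigma.fst h
    cases h
    exact hup ⟨b, hbc⟩

theorem height_of_isMatchedUp {v : Σ i, X i} (hv : IsMatchedUp X M v) : height X M v = v.1 + 1 :=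
  if_pos hv

theorem height_of_not_isMatchedUp {v : Σ i, X i} (hv : ¬ IsMatchedUp X M v) :
    height X M v = v.1 :=
  if_neg hv

theorem fst_le_height (v : Σ i, X i) : v.1 ≤ height X M v := by
  unfold height
  split_ifs <;> omega

theorem height_le_fst_add_one (v : Σ i, X i) : height X M v ≤ v.1 + 1 := by
  unfold height
  split_ifs <;> omega

theorem MPath.reflTransGen {v w : Σ i, X i} (p : MPath X d M v w) :
    Relation.ReflTransGen (MStep X d M) v w := by
  induction p with
  | nil v => exact .refl
  | down i c c' hne hnm _ _ ih => exact .head (.down i c c' hne hnm) ih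
  | up i c c' hmem _ _ ih => exact .head (.up i c c' hmem) ih

namespace IsAcyclicUnitMatching

theorem height_le_of_mStep (hM : IsAcyclicUnitMatching X d M) {v u : Σ i, X i}
    (h : MStep X d M v u) : height X M u ≤ height X M v := by
  cases h with
  | down i c c' _ _ => exact (height_le_fst_add_one _).trans (fst_le_height (⟨i + 1, c⟩ : Σ i, X i))
  | up i c c' hmem =>
    rw [height_of_not_isMatchedUp (hM.not_isMatchedUp hmem),
      height_of_isMatchedUp (v := ⟨i, c'⟩) ⟨c, hmem⟩]

theorem height_le_of_reflTransGen (hM : IsAcyclicUnitMatching X d M) {v u : Σ i, X i}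
    (h : Relation.ReflTransGen (MStep X d M) v u) : height X M u ≤ height X M v := by
  induction h with
  | refl => exact le_rfl
  | tail _ hstep ih => exact (hM.height_le_of_mStep hstep).trans ih

-- The last step of a path to a critical vertex goes down.
theorem lt_height_of_transGen (hM : IsAcyclicUnitMatching X d M) {v w : Σ i, X i}
    (hw : CriticalV X M w) (h : Relation.TransGen (MStep X d M) v w) : w.1 < height X M v := by
  obtain ⟨u, hvu, huw⟩ := Relation.TransGen.tail'_iff.mp h
  cases huw with
  | down i c c' _ _ =>
    exact (fst_le_height (⟨i + 1, c⟩ : Σ i, X i)).trans (hM.height_le_of_reflTransGen hvu)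
  | up i c c' hmem => exact (hw.notMem c' hmem).elim

theorem Gamma_self (hM : IsAcyclicUnitMatching X d M) (v : Σ i, X i) : Gamma X d M v v = 1 := by
  have eq_nil (p : MPath X d M v v) : p = .nil v := by
    cases p with
    | nil => rfl
    | down i c c' hne hnm _ p =>
      exact (hM.acyclic _ (.head' (.down i c c' hne hnm) p.reflTransGen)).elim
    | up i c c' hmem _ p => exact (hM.acyclic _ (.head' (.up i c c' hmem) p.reflTransGen)).elim
  let : Unique (MPath X d M v v) := ⟨⟨.nil v⟩, eq_nil⟩
  exact finsum_unique _

theorem Gamma_eq_zero_of_height_le (hM : IsAcyclicUnitMatching X d M) {v w : Σ i, X i}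
    (hw : CriticalV X M w) (hne : v ≠ w) (hle : height X M v ≤ w.1) : Gamma X d M v w = 0 := by
  have : IsEmpty (MPath X d M v w) := by
    refine ⟨fun p => hle.not_gt (hM.lt_height_of_transGen hw ?_)⟩
    exact (Relation.reflTransGen_iff_eq_or_transGen.mp p.reflTransGen).resolve_left hne.symm
  exact finsum_of_isEmpty _

section

variable [∀ i, Finite (X i)]

theorem finite_reachable (hM : IsAcyclicUnitMatching X d M) (v : Σ i, X i) :
    {u | Relation.ReflTransGen (MStep X d M) v u}.Finite := by
  have finite_fst_le : (Sigma.fst ⁻¹' Set.Iic (height X M v) : Set (Σ i, X i)).Finite := by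
    refine (Set.finite_Iic _).preimage' fun i _ => ?_
    rw [← Set.range_sigmaMk]
    exact Set.finite_range _
  exact finite_fst_le.subset fun u hu =>
    (fst_le_height u).trans (hM.height_le_of_reflTransGen hu)

theorem wellFounded_swap_mStep (hM : IsAcyclicUnitMatching X d M) :
    WellFounded (Function.swap (MStep X d M)) := by
  have : IsStrictOrder _ (Relation.TransGen (Function.swap (MStep X d M))) :=
    { irrefl := fun v hv => hM.acyclic v (Relation.transGen_swap.mp hv)
      trans := fun _ _ _ => .trans }
  refine ⟨fun v => (Set.WellFoundedOn.acc_iff_wellFoundedOn.out 0 1).mpr ?_⟩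
  have finite_reachable := hM.finite_reachable v
  simp only [← Relation.reflTransGen_swap (r := MStep X d M)] at finite_reachable
  exact finite_reachable.wellFoundedOn.mono (fun _ _ => Relation.TransGen.single) subset_rfl

theorem finite_mPath (hM : IsAcyclicUnitMatching X d M) (v w : Σ i, X i) :
    Finite (MPath X d M v w) := by
  induction v using hM.wellFounded_swap_mStep.induction with
  | h v ih =>
  have : Finite {u // MStep X d M v u} :=
    (hM.finite_reachable v).subset fun _ => Relation.ReflTransGen.single
  have (u : {u // MStep X d M v u}) : Finite (MPath X d M u w) := ih u u.2
  let tail : MPath X d M v w → Option (Σ u : {u // MStep X d M v u}, MPath X d M u w)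
    | .nil _ => none
    | .down i c c' hne hnm _ p => some ⟨⟨⟨i, c'⟩, .down i c c' hne hnm⟩, p⟩
    | .up i c c' hmem _ p => some ⟨⟨⟨i + 1, c⟩, .up i c c' hmem⟩, p⟩
  refine Finite.of_injective tail fun p q hpq => ?_
  cases p <;> cases q <;> simp_all [tail] <;> omega

theorem Gamma_of_mem (hM : IsAcyclicUnitMatching X d M) {n : ℕ} {a : X (n + 1)} {c : X n}
    (hac : (a, c) ∈ M n) {w : Σ i, X i} (hw : CriticalV X M w) (hle : n ≤ w.1) :
    Gamma X d M ⟨n, c⟩ w = -Ring.inverse (d n a c) * Gamma X d M ⟨n + 1, a⟩ w := by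
  have := hM.finite_mPath ⟨n + 1, a⟩ w
  rw [Gamma, Gamma, mul_finsum' _ _ (Set.toFinite _)]
  refine (finsum_eq_of_bijective (MPath.up n a c hac w) ⟨fun p q hpq => ?_, fun p => ?_⟩
    fun p => rfl).symm
  · cases hpq
    rfl
  cases p with
  | nil => exact (hw.not_isMatchedUp ⟨a, hac⟩).elim
  | up _ a' _ hac' _ p =>
    obtain rfl := hM.upper_unique hac hac'
    exact ⟨p, rfl⟩
  | down m _ x _ _ _ p =>
    have height_x : height X M ⟨m, x⟩ ≤ m + 1 := height_le_fst_add_one _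
    rcases Relation.reflTransGen_iff_eq_or_transGen.mp p.reflTransGen with rfl | hp
    · simp at hle
    · exact absurd (hM.lt_height_of_transGen hw hp) (by omega)

end

end IsAcyclicUnitMatching

end

theorem liftMap_single {α β : Type} [Fintype α] [DecidableEq α] (w : α → β → R) (a : α) :
    liftMap w (Pi.single a 1) = w a := by
  ext b
  simp [liftMap, Pi.single_apply]

theorem Dmap_Dmap (hC : IsComplexAux X d) (n : ℕ) (v : X (n + 2) → R) :
    Dmap X d n (Dmap X d (n + 1) v) = 0 := by
  ext x
  simp only [Dmap, liftMap, LinearMap.coe_mk, AddHom.coe_mk, Finset.sum_mul, mul_assoc,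
    Pi.zero_apply]
  rw [Finset.sum_comm]
  simp only [← Finset.mul_sum, hC n _ x, mul_zero, Finset.sum_const_zero]

namespace IsAcyclicUnitMatching

theorem Gamma_of_not_isMatchedUp (hM : IsAcyclicUnitMatching X d M) {n : ℕ} {c : X (n + 1)}
    (hc : ¬ IsMatchedUp X M ⟨n + 1, c⟩) {w : Σ i, X i} (hcw : ⟨n + 1, c⟩ ≠ w) :
    Gamma X d M ⟨n + 1, c⟩ w = ∑ x with (c, x) ∉ M n, d n c x * Gamma X d M ⟨n, x⟩ w := by
  let T := {x : X n // (c, x) ∉ M n ∧ d n c x ≠ 0}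
  have finite_mPath (v) := hM.finite_mPath v w
  let : ∀ v, Fintype (MPath X d M v w) := fun v => Fintype.ofFinite _
  let cons (q : Σ x : T, MPath X d M ⟨n, x.1⟩ w) : MPath X d M ⟨n + 1, c⟩ w :=
    .down n c q.1.1 q.1.2.2 q.1.2.1 w q.2
  have cons_bijective : Function.Bijective cons := by
    refine ⟨?_, fun p => ?_⟩
    · rintro ⟨⟨x, hx⟩, p⟩ ⟨⟨y, hy⟩, q⟩ hpq
      cases hpq
      rfl
    · cases p with
      | nil => exact (hcw rfl).elim
      | up _ a _ hmem _ p => exact (hc ⟨a, hmem⟩).elim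
      | down _ _ x hne hnm _ p => exact ⟨⟨⟨x, hnm, hne⟩, p⟩, rfl⟩
  calc Gamma X d M ⟨n + 1, c⟩ w
      = ∑ᶠ q : Σ x : T, MPath X d M ⟨n, x.1⟩ w, d n c q.1.1 * MPath.weight X d M q.2 :=
        (finsum_eq_of_bijective cons cons_bijective fun _ => rfl).symm
    _ = ∑ x : T, d n c x.1 * Gamma X d M ⟨n, x.1⟩ w := by
        simp only [Gamma, finsum_eq_sum_of_fintype, Fintype.sum_sigma, Finset.mul_sum]
    _ = ∑ x with (c, x) ∉ M n ∧ d n c x ≠ 0, d n c x * Gamma X d M ⟨n, x⟩ w :=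
        (Finset.sum_subtype _ (by simp) fun x => d n c x * Gamma X d M ⟨n, x⟩ w).symm
    _ = ∑ x with (c, x) ∉ M n, d n c x * Gamma X d M ⟨n, x⟩ w := by
        rw [← Finset.filter_filter]
        exact Finset.sum_filter_of_ne fun x _ => left_ne_zero_of_mul

theorem sum_mul_Gamma_of_mem (hM : IsAcyclicUnitMatching X d M) {n : ℕ} {a : X (n + 1)} {c : X n}
    (hac : (a, c) ∈ M n) {w : X n} (hw : CriticalV X M ⟨n, w⟩) :
    ∑ x, d n a x * Gamma X d M ⟨n, x⟩ ⟨n, w⟩ = 0 := by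
  have filter_eq : Finset.univ.filter (fun x => (a, x) ∈ M n) = {c} := by
    ext x
    simpa using ⟨fun hx => hM.lower_unique hx hac, by rintro rfl; exact hac⟩
  rw [← Finset.sum_filter_add_sum_filter_not _ fun x => (a, x) ∈ M n, filter_eq,
    Finset.sum_singleton, ← hM.Gamma_of_not_isMatchedUp (hM.not_isMatchedUp hac) (by simp),
    hM.Gamma_of_mem hac hw le_rfl, neg_mul, mul_neg,
    Ring.mul_inverse_cancel_left _ _ (hM.isUnit hac), neg_add_cancel]

theorem Gamma_succ_of_critical (hM : IsAcyclicUnitMatching X d M) {n : ℕ} {c : X (n + 1)}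
    (hc : CriticalV X M ⟨n + 1, c⟩) (w : X n) :
    Gamma X d M ⟨n + 1, c⟩ ⟨n, w⟩ = ∑ x, d n c x * Gamma X d M ⟨n, x⟩ ⟨n, w⟩ := by
  rw [hM.Gamma_of_not_isMatchedUp hc.not_isMatchedUp (by simp),
    Finset.filter_true_of_mem fun x _ => hc.notMem x]

theorem fmap_single_of_critical (hM : IsAcyclicUnitMatching X d M) {n : ℕ} (c : Crit X M n) :
    fmap X d M n (Pi.single c.1 1) = Pi.single c 1 := by
  rw [fmap, liftMap_single]
  ext w
  rcases eq_or_ne w c with rfl | hne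
  · rw [hM.Gamma_self, Pi.single_eq_same]
  · rw [Pi.single_eq_of_ne hne]
    refine hM.Gamma_eq_zero_of_height_le w.2 (fun h => hne (Subtype.ext ?_)) ?_
    · exact (eq_of_heq (Sigma.mk.inj h).2).symm
    · exact (height_of_not_isMatchedUp c.2.not_isMatchedUp).le

theorem fmap_single_of_mem (hM : IsAcyclicUnitMatching X d M) {n : ℕ} {a : X (n + 1)} {c : X n}
    (hac : (a, c) ∈ M n) : fmap X d M (n + 1) (Pi.single a 1) = 0 := by
  rw [fmap, liftMap_single]
  ext w
  refine hM.Gamma_eq_zero_of_height_le w.2 (fun h => ?_) ?_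
  · exact w.2.notMem c (eq_of_heq (Sigma.mk.inj h).2 ▸ hac)
  · exact (height_of_not_isMatchedUp (hM.not_isMatchedUp hac)).le

theorem fmap_Dmap_single_of_critical (hM : IsAcyclicUnitMatching X d M) {n : ℕ}
    (c : Crit X M (n + 1)) :
    fmap X d M n (Dmap X d n (Pi.single c.1 1)) = DMmap X d M n (Pi.single c 1) := by
  simp only [Dmap, DMmap, liftMap_single]
  ext w
  exact (hM.Gamma_succ_of_critical c.2 w.1).symm

theorem fmap_Dmap_single_of_mem (hM : IsAcyclicUnitMatching X d M) {n : ℕ} {a : X (n + 1)}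
    {c : X n} (hac : (a, c) ∈ M n) : fmap X d M n (Dmap X d n (Pi.single a 1)) = 0 := by
  rw [Dmap, liftMap_single]
  ext w
  exact hM.sum_mul_Gamma_of_mem hac w.2

theorem span_morseGenerators (hM : IsAcyclicUnitMatching X d M) (n : ℕ) :
    Submodule.span R (morseGenerators X d M n) = ⊤ := by
  set S := Submodule.span R (morseGenerators X d M n)
  have single_mem (c : X n) : Pi.single c 1 ∈ S := by
    induction c using (InvImage.wf (Sigma.mk n) hM.wellFounded_swap_mStep.transGen).induction with
    | h c ih =>
    by_cases hc : IsMatchedUp X M ⟨n, c⟩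
    · obtain ⟨a, hac⟩ := hc
      have boundary_mem : ∑ x, d n a x • (Pi.single x 1 : X n → R) ∈ S := by
        rw [← pi_eq_sum_univ' (d n a), ← liftMap_single (d n)]
        exact Submodule.subset_span (Or.inr ⟨a, c, hac, rfl⟩)
      have rest_mem : ∑ x ∈ Finset.univ.erase c, d n a x • (Pi.single x 1 : X n → R) ∈ S := by
        refine S.sum_mem fun x hx => ?_
        by_cases hax : d n a x = 0
        · rw [hax, zero_smul]
          exact S.zero_mem
        · have hxM : (a, x) ∉ M n := fun h =>
            Finset.ne_of_mem_erase hx (hM.lower_unique h hac)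
          exact S.smul_mem _ (ih x (.head (.down n a x hax hxM) (.single (.up n a c hac))))
      rw [← Finset.add_sum_erase _ _ (Finset.mem_univ c),
        S.add_mem_iff_left rest_mem] at boundary_mem
      exact (S.smul_mem_iff_of_isUnit (hM.isUnit hac)).mp boundary_mem
    · exact Submodule.subset_span (Or.inl ⟨c, hc, rfl⟩)
  rw [eq_top_iff, ← (Pi.basisFun R (X n)).span_eq, Submodule.span_le]
  rintro _ ⟨c, rfl⟩
  simpa using single_mem c

end IsAcyclicUnitMatching

theorem fmap_chain_map_general (hC : IsComplexAux X d) (hM : IsAcyclicUnitMatching X d M) (i : ℕ) :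
    DMmap X d M i ∘ₗ fmap X d M (i + 1) = fmap X d M i ∘ₗ Dmap X d i := by
  refine LinearMap.ext_on (hM.span_morseGenerators (i + 1)) ?_
  rintro _ (⟨c, hup, rfl⟩ | ⟨a, c, hac, rfl⟩) <;> simp only [LinearMap.comp_apply]
  · by_cases hdown : ∃ b, (c, b) ∈ M i
    · obtain ⟨b, hcb⟩ := hdown
      rw [hM.fmap_single_of_mem hcb, hM.fmap_Dmap_single_of_mem hcb, map_zero]
    · have hc := criticalV_succ_of_not_matched hup (not_exists.mp hdown)
      rw [hM.fmap_single_of_critical ⟨c, hc⟩, hM.fmap_Dmap_single_of_critical ⟨c, hc⟩]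
  · rw [hM.fmap_Dmap_single_of_mem hac, Dmap_Dmap hC, map_zero, map_zero]

end

/-- Lemma B.2 (C1).  If `M` is an acyclic matching on the graph
`G(C)` of the chain complex `C`, then `f` is a morphism of complexes:
`∂^M ∘ f = f ∘ ∂` in every homological degree. -/
theorem fmap_chain_map
    (hC : IsComplexAux X d) (hM : IsAcyclicMatching X d M) :
    ∀ i, DMmap X d M i ∘ₗ fmap X d M (i + 1) = fmap X d M i ∘ₗ Dmap X d i :=
  fmap_chain_map_general hC hM.isAcyclicUnitMatching

end ADMT

end
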